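/- Let 0 < n < d be integers, β > 0, A, C₀, c₁ > 0, and let μ be an n-ADR measure on ℝ^d with support E. There is a constant C, depending only on n, d, β, A, C₀, c₁ and the ADR constant of μ, with the following property. Let S satisfy |S(x,y)| ≤ A|x−y|^{−(n+β)} and |S(x,y)−S(x,y′)| ≤ A|y−y′| |x−y|^{−(n+β+1)} for |y−y′| ≤ |x−y|/2. Let x ∈ ℝ^d∖E with ℓ = dist(x,E), and suppose we are given, for each integer k ≥ 0, an n-plane L_k intersecting B(x, 2^k ℓ), c_k ∈ [0, C₀] and α_k ∈ [0,1] satisfying conditions (i)–(iii) of the multiscale hypotheses, and additionally c₁ ℓ ≤ dist(x, L_0) ≤ c₁^{−1} ℓ. Then |T_{S,μ}1(x)| ≤ C ( ℓ^{−β} Σ_{k≥0} 2^{−kβ} α_k + sup { |T_{S,L}1(x)| : L an n-plane with c₁ ℓ ≤ dist(x,L) ≤ c₁^{−1} ℓ } ). -/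

import Mathlib

open MeasureTheory Metric Set
open scoped ENNReal NNReal

noncomputable section

abbrev Euc (d : ℕ) := EuclideanSpace ℝ (Fin d)

/-- The closed support of a Borel measure on `ℝ^d`. -/
def msupport {d : ℕ} (μ : Measure (Euc d)) : Set (Euc d) :=
  {x | ∀ r > 0, 0 < μ (Metric.ball x r)}

/-- `L` is an `n`-dimensional affine subspace (an `n`-plane) of `ℝ^d`. -/
def IsNPlane {d : ℕ} (n : ℕ) (L : Set (Euc d)) : Prop :=
  ∃ W : AffineSubspace ℝ (Euc d), (W : Set (Euc d)) = L ∧ Module.finrank ℝ W.direction = n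

/-- `μ` is `n`-Ahlfors–David regular with constant `A` and (unbounded) support `E`. -/
def IsADRWith {d : ℕ} (n : ℕ) (A : ℝ) (μ : Measure (Euc d)) (E : Set (Euc d)) : Prop :=
  1 ≤ A ∧ msupport μ = E ∧ ¬ Bornology.IsBounded E ∧
    ∀ x ∈ E, ∀ r : ℝ, 0 < r →
      ENNReal.ofReal (A⁻¹ * r ^ n) ≤ μ (closedBall x r) ∧
      μ (closedBall x r) ≤ ENNReal.ofReal (A * r ^ n)

/-- `μ` is `n`-uniformly rectifiable: `n`-ADR plus big pieces of Lipschitz images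
(with BPLI constants `θ`, `M`). -/
def IsURWith {d : ℕ} (n : ℕ) (A θ M : ℝ) (μ : Measure (Euc d)) (E : Set (Euc d)) : Prop :=
  IsADRWith n A μ E ∧ 0 < θ ∧ 0 < M ∧
    ∀ x ∈ E, ∀ r : ℝ, 0 < r →
      ∃ g : EuclideanSpace ℝ (Fin n) → Euc d, LipschitzWith (Real.toNNReal M) g ∧
        ENNReal.ofReal (θ * r ^ n) ≤ μ (closedBall x r ∩ g '' (closedBall 0 r))

/-- `S` belongs to the kernel class `K_{n+β}(ℝ^d)` with constant `A`:
size bound `|S(x,y)| ≤ A|x-y|^{-(n+β)}` and Lipschitz-in-`y` bound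
`|S(x,y) - S(x,y')| ≤ A|y-y'| |x-y|^{-(n+β+1)}` for `|y-y'| ≤ |x-y|/2`. -/
def IsCZKernel {d : ℕ} (n : ℕ) (β A : ℝ) (S : Euc d → Euc d → ℝ) : Prop :=
  (∀ x y : Euc d, x ≠ y → |S x y| ≤ A / dist x y ^ ((n : ℝ) + β)) ∧
  (∀ x y y' : Euc d, x ≠ y → dist y y' ≤ dist x y / 2 →
    |S x y - S x y'| ≤ A * dist y y' / dist x y ^ ((n : ℝ) + β + 1))

/-- Radial Lipschitz cutoff vanishing on `B(x,r)`, equal to one off the double ball. -/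
def cutR {d : ℕ} (x : Euc d) (r : ℝ) (y : Euc d) : ℝ := max 0 (min 1 ((dist x y - r) / r))

lemma cutR_nonneg {d : ℕ} (x : Euc d) (r : ℝ) (y : Euc d) : 0 ≤ cutR x r y := le_max_left _ _

lemma cutR_le_one {d : ℕ} (x : Euc d) (r : ℝ) (y : Euc d) : cutR x r y ≤ 1 :=
  max_le zero_le_one (min_le_left _ _)

lemma cutR_zero {d : ℕ} (x : Euc d) {r : ℝ} (hr : 0 < r) (y : Euc d) (h : dist x y ≤ r) :
    cutR x r y = 0 := by
  unfold cutR
  apply max_eq_left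
  apply (min_le_right _ _).trans
  apply div_nonpos_of_nonpos_of_nonneg <;> linarith

lemma cutR_one {d : ℕ} (x : Euc d) {r : ℝ} (hr : 0 < r) (y : Euc d) (h : 2 * r ≤ dist x y) :
    cutR x r y = 1 := by
  unfold cutR
  have : 1 ≤ (dist x y - r) / r := by
    rw [le_div_iff₀ hr]; linarith
  rw [min_eq_left this]; norm_num

lemma cutR_diff {d : ℕ} (x : Euc d) {r : ℝ} (hr : 0 < r) (y y' : Euc d) :
    |cutR x r y - cutR x r y'| ≤ dist y y' / r := by
  unfold cutR
  have h1 : |max 0 (min 1 ((dist x y - r) / r)) - max 0 (min 1 ((dist x y' - r) / r))|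
      ≤ |(dist x y - r) / r - (dist x y' - r) / r| := by
    refine (abs_max_sub_max_le_max _ _ _ _).trans ?_
    refine max_le (by simp) ?_
    refine (abs_min_sub_min_le_max _ _ _ _).trans ?_
    exact max_le (by simp) le_rfl
  refine h1.trans ?_
  rw [← sub_div, abs_div, abs_of_pos hr]
  gcongr
  have : dist x y - r - (dist x y' - r) = dist y x - dist y' x := by
    rw [dist_comm x y, dist_comm x y']; ring
  rw [this]
  exact abs_dist_sub_le _ _ _

lemma cutR_diff4 {d : ℕ} (x : Euc d) {r : ℝ} (hr : 0 < r) (y y' : Euc d) (hxy : x ≠ y)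
    (h : dist y y' ≤ dist x y / 2) :
    |cutR x r y - cutR x r y'| ≤ 4 * dist y y' / dist x y := by
  have hp : 0 < dist x y := dist_pos.2 hxy
  by_cases h4 : 4 * r ≤ dist x y
  · have h' : 2 * r ≤ dist x y' := by
      have := dist_triangle_right x y y'
      have := dist_triangle x y' y
      rw [dist_comm y' y] at this
      linarith
    rw [cutR_one x hr y (by linarith), cutR_one x hr y' h']
    simp only [sub_self, abs_zero]
    positivity
  · refine (cutR_diff x hr y y').trans ?_
    rw [div_le_div_iff₀ hr hp]
    have := dist_nonneg (x := y) (y := y')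
    nlinarith

/-- The truncated kernel. -/
def FR {d : ℕ} (S : Euc d → Euc d → ℝ) (x : Euc d) (r : ℝ) (y : Euc d) : ℝ :=
  cutR x r y * S x y

/-- The truncated size function. -/
def GR {d : ℕ} (e : ℝ) (x : Euc d) (r : ℝ) (y : Euc d) : ℝ :=
  if r ≤ dist x y then 1 / dist x y ^ e else 0

lemma GR_nonneg {d : ℕ} (e : ℝ) (x : Euc d) (r : ℝ) (y : Euc d) : 0 ≤ GR e x r y := by
  unfold GR; split_ifs <;> positivity

lemma FR_diff {d n : ℕ} {β A : ℝ} (hA : 0 < A) {S : Euc d → Euc d → ℝ}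
    (hS : IsCZKernel n β A S) (x : Euc d) {r : ℝ} (hr : 0 < r) (y y' : Euc d) (hxy : x ≠ y)
    (h : dist y y' ≤ dist x y / 2) :
    |FR S x r y - FR S x r y'| ≤ 5 * A * dist y y' / dist x y ^ ((n : ℝ) + β + 1) := by
  have hp : 0 < dist x y := dist_pos.2 hxy
  have e1 : FR S x r y - FR S x r y' =
      cutR x r y' * (S x y - S x y') + (cutR x r y - cutR x r y') * S x y := by
    unfold FR; ring
  rw [e1]
  refine (abs_add_le _ _).trans ?_
  rw [abs_mul, abs_mul, abs_of_nonneg (cutR_nonneg x r y')]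
  have h1 := hS.1 x y hxy
  have h2 := hS.2 x y y' hxy h
  have h3 := cutR_diff4 x hr y y' hxy h
  have t1 : cutR x r y' * |S x y - S x y'| ≤ 1 * (A * dist y y' / dist x y ^ ((n : ℝ) + β + 1)) :=
    mul_le_mul (cutR_le_one _ _ _) h2 (abs_nonneg _) zero_le_one
  have t2 : |cutR x r y - cutR x r y'| * |S x y| ≤
      (4 * dist y y' / dist x y) * (A / dist x y ^ ((n : ℝ) + β)) :=
    mul_le_mul h3 h1 (abs_nonneg _) (by positivity)
  refine (add_le_add t1 t2).trans (le_of_eq ?_)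
  rw [Real.rpow_add_one hp.ne']
  have : 0 < dist x y ^ ((n : ℝ) + β) := by positivity
  field_simp
  ring

lemma FR_bound {d n : ℕ} {β A : ℝ} (hA : 0 < A) {S : Euc d → Euc d → ℝ}
    (hS : IsCZKernel n β A S) (x : Euc d) {r : ℝ} (hr : 0 < r) (y : Euc d) :
    |FR S x r y| ≤ A * GR ((n : ℝ) + β) x r y := by
  unfold FR GR
  split_ifs with h
  · have hxy : x ≠ y := dist_pos.1 (hr.trans_le h)
    rw [abs_mul, abs_of_nonneg (cutR_nonneg x r y), mul_one_div]
    calc cutR x r y * |S x y| ≤ 1 * |S x y| := by gcongr; exact cutR_le_one _ _ _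
      _ ≤ _ := by rw [one_mul]; exact hS.1 x y hxy
  · rw [cutR_zero x hr y (by linarith)]; simp

lemma GR_le {d : ℕ} {e : ℝ} (he : 0 < e) (x : Euc d) {r : ℝ} (hr : 0 < r) (y : Euc d) :
    GR e x r y ≤ 1 / r ^ e := by
  unfold GR
  split_ifs with h
  · gcongr
  · positivity

lemma FR_lip {d n : ℕ} {β A : ℝ} (hβ : 0 < β) (hA : 0 < A) {S : Euc d → Euc d → ℝ}
    (hS : IsCZKernel n β A S) (x : Euc d) {r : ℝ} (hr : 0 < r) :
    ∀ y y' : Euc d, |FR S x r y - FR S x r y'| ≤ 5 * A / r ^ ((n : ℝ) + β + 1) * dist y y' := by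
  have key : ∀ y y' : Euc d, r ≤ dist x y →
      |FR S x r y - FR S x r y'| ≤ 5 * A / r ^ ((n : ℝ) + β + 1) * dist y y' := by
    intro y y' hy
    have hxy : x ≠ y := dist_pos.1 (hr.trans_le hy)
    have hp : 0 < dist x y := dist_pos.2 hxy
    by_cases h : dist y y' ≤ dist x y / 2
    · refine (FR_diff hA hS x hr y y' hxy h).trans ?_
      rw [div_mul_eq_mul_div]
      gcongr
    · push Not at h
      have he : 0 < (n : ℝ) + β := by positivity
      have b1 := (FR_bound hA hS x hr y).trans
        (mul_le_mul_of_nonneg_left (GR_le he x hr y) hA.le)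
      have b2 := (FR_bound hA hS x hr y').trans
        (mul_le_mul_of_nonneg_left (GR_le he x hr y') hA.le)
      refine (abs_sub _ _).trans ?_
      rw [Real.rpow_add_one hr.ne']
      have hq : 0 < r ^ ((n : ℝ) + β) := by positivity
      have h2 : r ≤ 2 * dist y y' := by linarith
      calc |FR S x r y| + |FR S x r y'| ≤ A * (1 / r ^ ((n : ℝ) + β)) + A * (1 / r ^ ((n : ℝ) + β)) :=
            add_le_add b1 b2
        _ = (2 * A / (r ^ ((n : ℝ) + β) * r)) * r := by field_simp; ring
        _ ≤ (2 * A / (r ^ ((n : ℝ) + β) * r)) * (2 * dist y y') := by gcongr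
        _ = 4 * A / (r ^ ((n : ℝ) + β) * r) * dist y y' := by ring
        _ ≤ _ := by gcongr; norm_num
  intro y y'
  by_cases h : r ≤ dist x y
  · exact key y y' h
  by_cases h' : r ≤ dist x y'
  · rw [abs_sub_comm, dist_comm]; exact key y' y h'
  · have : FR S x r y = 0 := by unfold FR; rw [cutR_zero x hr y (by linarith)]; simp
    have h2 : FR S x r y' = 0 := by unfold FR; rw [cutR_zero x hr y' (by linarith)]; simp
    rw [this, h2]; simp; positivity

lemma FR_cont {d n : ℕ} {β A : ℝ} (hβ : 0 < β) (hA : 0 < A) {S : Euc d → Euc d → ℝ}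
    (hS : IsCZKernel n β A S) (x : Euc d) {r : ℝ} (hr : 0 < r) : Continuous (FR S x r) := by
  have : LipschitzWith (Real.toNNReal (5 * A / r ^ ((n : ℝ) + β + 1))) (FR S x r) := by
    apply LipschitzWith.of_dist_le_mul
    intro y y'
    rw [Real.coe_toNNReal _ (by positivity), Real.dist_eq]
    exact FR_lip hβ hA hS x hr y y'
  exact this.continuous

lemma GR_meas {d : ℕ} (e : ℝ) (x : Euc d) (r : ℝ) : Measurable (GR e x r) := by
  unfold GR
  apply Measurable.ite
  · exact measurableSet_le measurable_const (measurable_const.dist measurable_id)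
  · fun_prop
  · fun_prop

/-- Upper growth at `x`. -/
def Grow {d : ℕ} (ν : Measure (Euc d)) (x : Euc d) (n : ℕ) (D : ℝ) : Prop :=
  ∀ r : ℝ, 0 < r → ν (closedBall x r) ≤ ENNReal.ofReal (D * r ^ n)

/-- The tail constant. -/
def KK (n : ℕ) (β : ℝ) : ℝ := 2 ^ n * (1 - (2 : ℝ) ^ (-β))⁻¹

lemma two_rpow_lt {β : ℝ} (hβ : 0 < β) : (2 : ℝ) ^ (-β) < 1 :=
  Real.rpow_lt_one_of_one_lt_of_neg (by norm_num) (by linarith)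

lemma KK_pos (n : ℕ) {β : ℝ} (hβ : 0 < β) : 0 < KK n β := by
  unfold KK
  have := two_rpow_lt hβ
  have : 0 < 1 - (2 : ℝ) ^ (-β) := by linarith
  positivity

lemma tail_lintegral {d n : ℕ} {β D : ℝ} (hβ : 0 < β) (hD : 0 ≤ D) {ν : Measure (Euc d)}
    {x : Euc d} (hν : Grow ν x n D) {r : ℝ} (hr : 0 < r) :
    ∫⁻ y, ENNReal.ofReal (GR ((n : ℝ) + β) x r y) ∂ν ≤
      ENNReal.ofReal (KK n β * D * r ^ (-β)) := by
  have he : 0 < (n : ℝ) + β := by positivity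
  have hpt : ∀ y, ENNReal.ofReal (GR ((n : ℝ) + β) x r y) ≤
      ∑' i : ℕ, (closedBall x (2 ^ (i + 1) * r)).indicator
        (fun _ => ENNReal.ofReal (1 / (2 ^ i * r) ^ ((n : ℝ) + β))) y := by
    intro y
    unfold GR
    split_ifs with h
    · obtain ⟨i, hi1, hi2⟩ := exists_nat_pow_near (x := dist x y / r) (y := (2 : ℝ))
        (by rw [le_div_iff₀ hr]; linarith) (by norm_num)
      rw [le_div_iff₀ hr] at hi1
      rw [div_lt_iff₀ hr] at hi2
      refine le_trans ?_ (ENNReal.le_tsum i)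
      rw [Set.indicator_of_mem (by rw [mem_closedBall, dist_comm]; exact hi2.le)]
      apply ENNReal.ofReal_le_ofReal
      gcongr
    · simp
  calc _ ≤ ∫⁻ y, ∑' i : ℕ, (closedBall x (2 ^ (i + 1) * r)).indicator
        (fun _ => ENNReal.ofReal (1 / (2 ^ i * r) ^ ((n : ℝ) + β))) y ∂ν := lintegral_mono hpt
    _ = ∑' i : ℕ, ∫⁻ y, (closedBall x (2 ^ (i + 1) * r)).indicator
        (fun _ => ENNReal.ofReal (1 / (2 ^ i * r) ^ ((n : ℝ) + β))) y ∂ν := by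
        apply lintegral_tsum
        intro i
        exact (measurable_const.indicator measurableSet_closedBall).aemeasurable
    _ ≤ ∑' i : ℕ, ENNReal.ofReal (2 ^ n * D * r ^ (-β) * ((2 : ℝ) ^ (-β)) ^ i) := by
        apply ENNReal.tsum_le_tsum
        intro i
        rw [lintegral_indicator_const measurableSet_closedBall]
        have hp : 0 < (2 : ℝ) ^ i * r := by positivity
        calc _ ≤ ENNReal.ofReal (1 / (2 ^ i * r) ^ ((n : ℝ) + β)) *
              ENNReal.ofReal (D * (2 ^ (i + 1) * r) ^ n) := by
                gcongr; exact hν _ (by positivity)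
          _ = _ := by
            rw [← ENNReal.ofReal_mul (by positivity)]
            congr 1
            have e1 : ((2 : ℝ) ^ (-β)) ^ i = ((2 : ℝ) ^ i) ^ (-β) := by
              rw [← Real.rpow_natCast, ← Real.rpow_natCast, ← Real.rpow_mul (by norm_num),
                ← Real.rpow_mul (by norm_num), mul_comm]
            have e2 : ((2 : ℝ) ^ i * r) ^ (-β) = ((2 : ℝ) ^ i) ^ (-β) * r ^ (-β) :=
              Real.mul_rpow (by positivity) hr.le
            have e3 : ((2 : ℝ) ^ i * r) ^ ((n : ℝ) + β) =
                ((2 : ℝ) ^ i * r) ^ n * (((2 : ℝ) ^ i * r) ^ (-β))⁻¹ := by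
              rw [Real.rpow_add hp, Real.rpow_natCast, Real.rpow_neg hp.le, inv_inv]
            have e4 : ((2 : ℝ) ^ (i + 1) * r) ^ n = 2 ^ n * ((2 : ℝ) ^ i * r) ^ n := by
              rw [← mul_pow]; ring
            have : 2 ^ n * D * r ^ (-β) * ((2 : ℝ) ^ (-β)) ^ i =
              2 ^ n * D * ((2 : ℝ) ^ i * r) ^ (-β) := by rw [e1, e2]; ring
            rw [this, e3, e4]
            have : 0 < ((2 : ℝ) ^ i * r) ^ (-β) := by positivity
            field_simp
    _ = _ := by
        rw [← ENNReal.ofReal_tsum_of_nonneg]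
        · rw [tsum_mul_left, tsum_geometric_of_lt_one (by positivity) (two_rpow_lt hβ)]
          congr 1; unfold KK; ring
        · intro i; positivity
        · exact (summable_geometric_of_lt_one (by positivity) (two_rpow_lt hβ)).mul_left _

lemma tail_GR {d n : ℕ} {β D : ℝ} (hβ : 0 < β) (hD : 0 ≤ D) {ν : Measure (Euc d)}
    {x : Euc d} (hν : Grow ν x n D) {r : ℝ} (hr : 0 < r) :
    Integrable (GR ((n : ℝ) + β) x r) ν ∧
      ∫ y, GR ((n : ℝ) + β) x r y ∂ν ≤ KK n β * D * r ^ (-β) := by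
  have h := tail_lintegral hβ hD hν hr
  have hm := (GR_meas ((n : ℝ) + β) x r).aestronglyMeasurable (μ := ν)
  have h0 : 0 ≤ᵐ[ν] GR ((n : ℝ) + β) x r := Filter.Eventually.of_forall (GR_nonneg _ x r)
  refine ⟨?_, ?_⟩
  · refine ⟨hm, ?_⟩
    rw [hasFiniteIntegral_iff_ofReal h0]
    exact h.trans_lt ENNReal.ofReal_lt_top
  · rw [integral_eq_lintegral_of_nonneg_ae h0 hm]
    apply ENNReal.toReal_le_of_le_ofReal _ h
    have := KK_pos n hβ
    positivity

lemma tail_FR {d n : ℕ} {β A D : ℝ} (hβ : 0 < β) (hA : 0 < A) (hD : 0 ≤ D)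
    {S : Euc d → Euc d → ℝ} (hS : IsCZKernel n β A S) {ν : Measure (Euc d)}
    {x : Euc d} (hν : Grow ν x n D) {r : ℝ} (hr : 0 < r) :
    Integrable (FR S x r) ν ∧ ∫ y, |FR S x r y| ∂ν ≤ A * (KK n β * D * r ^ (-β)) ∧
    |∫ y, FR S x r y ∂ν| ≤ A * (KK n β * D * r ^ (-β)) := by
  obtain ⟨h1, h2⟩ := tail_GR hβ hD hν hr
  have hi : Integrable (FR S x r) ν := by
    refine (h1.const_mul A).mono' (FR_cont hβ hA hS x hr).aestronglyMeasurable ?_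
    exact Filter.Eventually.of_forall (fun y => FR_bound hA hS x hr y)
  have h3 : ∫ y, |FR S x r y| ∂ν ≤ A * (KK n β * D * r ^ (-β)) := by
    calc ∫ y, |FR S x r y| ∂ν ≤ ∫ y, A * GR ((n : ℝ) + β) x r y ∂ν :=
          integral_mono hi.abs (h1.const_mul A) (fun y => FR_bound hA hS x hr y)
      _ = A * ∫ y, GR ((n : ℝ) + β) x r y ∂ν := integral_const_mul _ _
      _ ≤ _ := by gcongr
  exact ⟨hi, h3, abs_integral_le_integral_abs.trans h3⟩

/-- Growth constant for planes. -/
def DL (n : ℕ) : ℝ :=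
  2 ^ n * ((μH[(n : ℝ)] : Measure (EuclideanSpace ℝ (Fin n))) (ball 0 1)).toReal

lemma DL_nonneg (n : ℕ) : 0 ≤ DL n := by unfold DL; positivity

lemma plane_grow {d n : ℕ} {L : Set (Euc d)} (hL : IsNPlane n L) (x : Euc d) :
    Grow ((μH[(n : ℝ)] : Measure (Euc d)).restrict L) x n (DL n) := by
  obtain ⟨W, rfl, hW⟩ := hL
  subst hW
  set n := Module.finrank ℝ W.direction with hn
  intro r hr
  rw [Measure.restrict_apply measurableSet_closedBall]
  rcases (closedBall x r ∩ (W : Set (Euc d))).eq_empty_or_nonempty with h | ⟨z, hz, hzW⟩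
  · rw [h]; simp
  have : ((μH[(n : ℝ)] : Measure (EuclideanSpace ℝ (Fin n)))).IsAddHaarMeasure := by
    simpa using MeasureTheory.isAddHaarMeasure_hausdorffMeasure (E := EuclideanSpace ℝ (Fin n))
  let b := stdOrthonormalBasis ℝ W.direction
  let g : EuclideanSpace ℝ (Fin n) → Euc d := fun u => z + (b.repr.symm u : Euc d)
  have hg : LipschitzWith 1 g := by
    apply LipschitzWith.of_dist_le_mul
    intro u v
    simp only [g, dist_add_left, NNReal.coe_one, one_mul]
    rw [← Subtype.dist_eq, LinearIsometryEquiv.dist_map]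
  have hsub : closedBall x r ∩ (W : Set (Euc d)) ⊆ g '' closedBall 0 (2 * r) := by
    rintro y ⟨hy, hyW⟩
    have hv : y - z ∈ W.direction := AffineSubspace.vsub_mem_direction hyW hzW
    refine ⟨b.repr ⟨y - z, hv⟩, ?_, ?_⟩
    · rw [mem_closedBall_zero_iff, LinearIsometryEquiv.norm_map, Submodule.coe_norm]
      simp only
      rw [← dist_eq_norm]
      have := dist_triangle_right y z x
      rw [mem_closedBall] at hy hz
      linarith
    · simp [g]
  calc μH[(n : ℝ)] (closedBall x r ∩ (W : Set (Euc d))) ≤ μH[(n : ℝ)] (g '' closedBall 0 (2 * r)) :=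
        measure_mono hsub
    _ ≤ _ := hg.hausdorffMeasure_image_le (by positivity) _
    _ = ENNReal.ofReal ((2 * r) ^ n) * μH[(n : ℝ)] (ball (0 : EuclideanSpace ℝ (Fin n)) 1) := by
        rw [Measure.addHaar_closedBall _ _ (by positivity)]; simp
    _ = _ := by
        unfold DL
        rw [mul_right_comm, ENNReal.ofReal_mul (by positivity), ENNReal.ofReal_toReal, mul_pow]
        exact measure_ball_lt_top.ne

lemma plane_closed {d n : ℕ} {L : Set (Euc d)} (hL : IsNPlane n L) : IsClosed L := by
  obtain ⟨W, rfl, hW⟩ := hL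
  exact W.closed_of_finiteDimensional

section
variable {d n : ℕ} (W W' : AffineSubspace ℝ (Euc d)) (q : Euc d)

/-- Orthogonal projection onto the affine subspace through `q` with the given direction. -/
def prj (W' : AffineSubspace ℝ (Euc d)) (q : Euc d) (y : Euc d) : Euc d :=
  q + W'.direction.starProjection (y - q)

lemma prj_lip : LipschitzWith 1 (prj W' q) := by
  apply LipschitzWith.of_dist_le_mul
  intro u v
  simp only [prj, NNReal.coe_one, one_mul, dist_eq_norm]
  rw [add_sub_add_left_eq_sub, ← map_sub]
  refine (W'.direction.norm_starProjection_apply_le _).trans ?_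
  simp

lemma prj_mem (hq : q ∈ W') (y : Euc d) : prj W' q y ∈ W' := by
  unfold prj
  rw [add_comm]
  exact AffineSubspace.vadd_mem_of_mem_direction (W'.direction.starProjection_apply_mem _) hq

lemma prj_sub (u v : Euc d) :
    prj W' q u - prj W' q v = W'.direction.starProjection (u - v) := by
  unfold prj
  rw [add_sub_add_left_eq_sub, ← map_sub]; simp

lemma prj_exp {δ : ℝ} 
    (h : ∀ v ∈ W.direction, ‖v - W'.direction.starProjection v‖ ≤ δ * ‖v‖)
    (u v : Euc d) (hu : u ∈ W) (hv : v ∈ W) :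
    (1 - δ) * dist u v ≤ dist (prj W' q u) (prj W' q v) := by
  rw [dist_eq_norm, dist_eq_norm, prj_sub]
  have h1 := h (u - v) (AffineSubspace.vsub_mem_direction hu hv)
  have h2 := norm_sub_norm_le (u - v) (W'.direction.starProjection (u - v))
  linarith

lemma prj_surj {δ : ℝ} (hδ : δ < 1) (p : Euc d) (hp : p ∈ W) (hq : q ∈ W')
    (hdim : Module.finrank ℝ W.direction = Module.finrank ℝ W'.direction)
    (h : ∀ v ∈ W.direction, ‖v - W'.direction.starProjection v‖ ≤ δ * ‖v‖)
    (w : Euc d) (hw : w ∈ W') : ∃ u ∈ W, prj W' q u = w := by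
  let T : W.direction →ₗ[ℝ] W'.direction :=
    W'.direction.orthogonalProjectionOnto.toLinearMap ∘ₗ W.direction.subtype
  have hT : ∀ v : W.direction, (T v : Euc d) = W'.direction.starProjection v := fun v => rfl
  have hinj : Function.Injective T := by
    rw [injective_iff_map_eq_zero]
    intro v hv
    have h1 := h v v.2
    rw [← hT, hv] at h1
    simp only [ZeroMemClass.coe_zero, sub_zero] at h1
    have : ‖(v : Euc d)‖ = 0 := by
      have := norm_nonneg (v : Euc d)
      nlinarith
    simpa using this
  have hsurj : Function.Surjective T :=
    (LinearMap.injective_iff_surjective_of_finrank_eq_finrank hdim).1 hinj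
  obtain ⟨v, hv⟩ := hsurj ⟨w - prj W' q p,
    AffineSubspace.vsub_mem_direction hw (prj_mem W' q hq p)⟩
  refine ⟨v + p, AffineSubspace.vadd_mem_of_mem_direction v.2 hp, ?_⟩
  have h1 := prj_sub W' q (v + p) p
  rw [add_sub_cancel_right, ← hT, hv] at h1
  simpa using h1

lemma prj_le1 {δ : ℝ} (hδ : δ < 1) (p : Euc d) (hp : p ∈ W) (hq : q ∈ W')
    (hdim : Module.finrank ℝ W.direction = Module.finrank ℝ W'.direction)
    (h : ∀ v ∈ W.direction, ‖v - W'.direction.starProjection v‖ ≤ δ * ‖v‖) :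
    (μH[(n : ℝ)] : Measure (Euc d)).restrict W' ≤
      ((μH[(n : ℝ)] : Measure (Euc d)).restrict W).map (prj W' q) := by
  have hm : Measurable (prj W' q) := (prj_lip W' q).continuous.measurable
  rw [Measure.le_iff]
  intro B hB
  rw [Measure.map_apply hm hB, Measure.restrict_apply hB, Measure.restrict_apply (hm hB)]
  have : B ∩ (W' : Set (Euc d)) ⊆ prj W' q '' (prj W' q ⁻¹' B ∩ (W : Set (Euc d))) := by
    rintro w ⟨hwB, hw⟩
    obtain ⟨u, hu, rfl⟩ := prj_surj W W' q hδ p hp hq hdim h w hw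
    exact ⟨u, ⟨hwB, hu⟩, rfl⟩
  refine (measure_mono this).trans ?_
  refine ((prj_lip W' q).hausdorffMeasure_image_le (by positivity) _).trans ?_
  simp

lemma prj_le2 {δ : ℝ} (hδ : δ < 1) (hq : q ∈ W')
    (h : ∀ v ∈ W.direction, ‖v - W'.direction.starProjection v‖ ≤ δ * ‖v‖) :
    ((μH[(n : ℝ)] : Measure (Euc d)).restrict W).map (prj W' q) ≤
      ENNReal.ofReal (((1 - δ)⁻¹) ^ n) • (μH[(n : ℝ)] : Measure (Euc d)).restrict W' := by
  have hm : Measurable (prj W' q) := (prj_lip W' q).continuous.measurable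
  have hδ' : 0 < 1 - δ := by linarith
  rw [Measure.le_iff]
  intro B hB
  rw [Measure.map_apply hm hB, Measure.smul_apply, Measure.restrict_apply hB,
    Measure.restrict_apply (hm hB), smul_eq_mul]
  set U := prj W' q ⁻¹' B ∩ (W : Set (Euc d)) with hU
  have hinj : InjOn (prj W' q) U := by
    intro u hu v hv huv
    have := prj_exp W W' q h u v hu.2 hv.2
    rw [huv, dist_self] at this
    have h0 := dist_nonneg (x := u) (y := v)
    exact dist_eq_zero.1 (by nlinarith)
  let g := Function.invFunOn (prj W' q) U
  have hg : ∀ u ∈ U, g (prj W' q u) = u := fun u hu => hinj.leftInvOn_invFunOn hu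
  have hglip : LipschitzOnWith (Real.toNNReal (1 - δ)⁻¹) g (prj W' q '' U) := by
    apply LipschitzOnWith.of_dist_le_mul
    rintro _ ⟨u, hu, rfl⟩ _ ⟨v, hv, rfl⟩
    rw [hg u hu, hg v hv, Real.coe_toNNReal _ (by positivity)]
    have := prj_exp W W' q h u v hu.2 hv.2
    rw [inv_mul_eq_div, le_div_iff₀ hδ']
    linarith
  have e : U = g '' (prj W' q '' U) := by
    ext u; constructor
    · intro hu; exact ⟨_, ⟨u, hu, rfl⟩, hg u hu⟩
    · rintro ⟨_, ⟨v, hv, rfl⟩, rfl⟩; rw [hg v hv]; exact hv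
  calc μH[(n : ℝ)] U = μH[(n : ℝ)] (g '' (prj W' q '' U)) := by rw [← e]
    _ ≤ _ := hglip.hausdorffMeasure_image_le (Nat.cast_nonneg n)
    _ ≤ _ := by
      rw [ENNReal.rpow_natCast, ENNReal.ofReal_pow (by positivity)]
      gcongr
      · exact le_rfl
      · rintro _ ⟨u, hu, rfl⟩
        exact ⟨hu.1, prj_mem W' q hq u⟩

end

lemma integral_compare {d : ℕ} {ν ν' : Measure (Euc d)} {K : ℝ} (hK : 1 ≤ K)
    (h1 : ν' ≤ ν) (h2 : ν ≤ ENNReal.ofReal K • ν') {F : Euc d → ℝ}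
    (hF' : Integrable F ν') :
    |∫ y, F y ∂ν - ∫ y, F y ∂ν'| ≤ (K - 1) * ∫ y, |F y| ∂ν' := by
  have hF2 : Integrable F (ENNReal.ofReal K • ν') := hF'.smul_measure ENNReal.ofReal_ne_top
  have hF : Integrable F ν := hF2.mono_measure h2
  have key : ∀ g : Euc d → ℝ, (∀ y, 0 ≤ g y) → Integrable g ν' →
      ∫ y, g y ∂ν' ≤ ∫ y, g y ∂ν ∧ ∫ y, g y ∂ν ≤ K * ∫ y, g y ∂ν' := by
    intro g hg hgi
    have hg2 : Integrable g (ENNReal.ofReal K • ν') := hgi.smul_measure ENNReal.ofReal_ne_top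
    have hg1 : Integrable g ν := hg2.mono_measure h2
    refine ⟨integral_mono_measure h1 (Filter.Eventually.of_forall hg) hg1, ?_⟩
    have := integral_mono_measure h2 (Filter.Eventually.of_forall hg) hg2
    rw [integral_smul_measure, ENNReal.toReal_ofReal (by linarith), smul_eq_mul] at this
    exact this
  obtain ⟨a1, a2⟩ := key (fun y => max (F y) 0) (fun y => le_max_right _ _) hF'.pos_part
  obtain ⟨b1, b2⟩ := key (fun y => max (-F y) 0) (fun y => le_max_right _ _) hF'.neg_part
  have e : ∀ y, F y = max (F y) 0 - max (-F y) 0 := by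
    intro y; rcases le_total 0 (F y) with h | h <;> simp [h]
  have e' : ∀ y, |F y| = max (F y) 0 + max (-F y) 0 := by
    intro y; rcases le_total 0 (F y) with h | h <;> simp [h, abs_of_nonneg, abs_of_nonpos]
  have i1 : ∫ y, F y ∂ν = ∫ y, max (F y) 0 ∂ν - ∫ y, max (-F y) 0 ∂ν := by
    rw [← integral_sub hF.pos_part hF.neg_part]; exact integral_congr_ae (.of_forall e)
  have i2 : ∫ y, F y ∂ν' = ∫ y, max (F y) 0 ∂ν' - ∫ y, max (-F y) 0 ∂ν' := by
    rw [← integral_sub hF'.pos_part hF'.neg_part]; exact integral_congr_ae (.of_forall e)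
  have i3 : ∫ y, |F y| ∂ν' = ∫ y, max (F y) 0 ∂ν' + ∫ y, max (-F y) 0 ∂ν' := by
    rw [← integral_add hF'.pos_part hF'.neg_part]; exact integral_congr_ae (.of_forall e')
  rw [i1, i2, i3, abs_le]
  constructor <;> nlinarith

lemma sub_proj_le {d : ℕ} (V : Submodule ℝ (Euc d)) (z : Euc d) :
    ‖z - V.starProjection z‖ ≤ ‖z‖ := by
  rw [← Submodule.starProjection_orthogonal_val]
  exact Submodule.norm_starProjection_apply_le _ _

lemma prj_dist_le {d : ℕ} (W' : AffineSubspace ℝ (Euc d)) (q w y : Euc d) (hq : q ∈ W')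
    (hw : w ∈ W') : dist y (prj W' q y) ≤ dist y w := by
  have h1 : W'.direction.starProjection (w - q) = w - q :=
    Submodule.starProjection_eq_self_iff.2 (AffineSubspace.vsub_mem_direction hw hq)
  have h2 : y - prj W' q y = (y - w) - W'.direction.starProjection (y - w) := by
    unfold prj
    have : y - q = (y - w) + (w - q) := by abel
    rw [this, map_add, h1]; abel
  rw [dist_eq_norm, dist_eq_norm, h2]
  exact sub_proj_le _ _

lemma bern {n : ℕ} (hn : 0 < n) {α : ℝ} (h0 : 0 ≤ α) (h : 32 * n * α ≤ 1) :
    1 ≤ ((1 - 4 * α)⁻¹) ^ n ∧ ((1 - 4 * α)⁻¹) ^ n - 1 ≤ 8 * n * α := by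
  have hn1 : (1 : ℝ) ≤ n := by exact_mod_cast hn
  have ha : α ≤ 1 / 32 := by nlinarith
  have hp : 0 < 1 - 4 * α := by linarith
  have hb := one_add_mul_le_pow (a := -(4 * α)) (by linarith) n
  have hq : 0 < (1 - 4 * α) ^ n := by positivity
  have hb' : 1 - 4 * n * α ≤ (1 - 4 * α) ^ n := by
    have : 1 + -(4 * α) = 1 - 4 * α := by ring
    rw [this] at hb; linarith
  constructor
  · rw [inv_pow]
    exact (one_le_inv₀ hq).2 (pow_le_one₀ hp.le (by linarith))
  · rw [inv_pow, sub_le_iff_le_add]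
    apply inv_le_of_inv_le₀ (by positivity)
    refine le_trans ?_ hb'
    apply inv_le_of_inv_le₀ (by nlinarith)
    rw [inv_le_iff_one_le_mul₀ (by nlinarith)]
    have : 0 ≤ n * α := by positivity
    nlinarith

/-- Constant for comparing planes. -/
def BP (n : ℕ) (β A : ℝ) : ℝ := (64 * n + 80 * 2 ^ β) * (A * (KK n β * DL n))

lemma BP_nonneg (n : ℕ) {β A : ℝ} (hβ : 0 < β) (hA : 0 < A) : 0 ≤ BP n β A := by
  unfold BP
  have := KK_pos n hβ
  have := DL_nonneg n
  positivity

lemma planes_compare {d n : ℕ} (hn : 0 < n) {β A : ℝ} (hβ : 0 < β) (hA : 0 < A)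
    {S : Euc d → Euc d → ℝ} (hS : IsCZKernel n β A S) {L L' : Set (Euc d)}
    (hL : IsNPlane n L) (hL' : IsNPlane n L') (x : Euc d) {r : ℝ} (hr : 0 < r) {α : ℝ}
    (h0 : 0 ≤ α) (hLr : (L ∩ closedBall x r).Nonempty)
    (hLr' : (L' ∩ closedBall x (2 * r)).Nonempty)
    (hH : hausdorffDist (L ∩ closedBall x (2 * r)) (L' ∩ closedBall x (2 * r)) ≤ α * (2 * r)) :
    |∫ y in L, FR S x r y ∂(μH[(n : ℝ)]) - ∫ y in L', FR S x r y ∂(μH[(n : ℝ)])|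
      ≤ BP n β A * α * r ^ (-β) := by
  have hKK := KK_pos n hβ
  have hDL := DL_nonneg n
  have hg := plane_grow hL x
  have hg' := plane_grow hL' x
  obtain ⟨f1, f2, f3⟩ := tail_FR hβ hA hDL hS hg hr
  obtain ⟨f1', f2', f3'⟩ := tail_FR hβ hA hDL hS hg' hr
  set Q := A * (KK n β * DL n * r ^ (-β)) with hQ
  have hQ0 : 0 ≤ Q := by positivity
  have hB : BP n β A * α * r ^ (-β) = (64 * n * α) * Q + 80 * 2 ^ β * α * Q := by
    rw [hQ]; unfold BP; ring
  rw [hB]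
  have hpos2 : 0 ≤ 80 * 2 ^ β * α * Q := by positivity
  by_cases hα : 32 * n * α ≤ 1
  swap
  · push Not at hα
    refine (abs_sub _ _).trans ?_
    nlinarith
  obtain ⟨k1, k2⟩ := bern hn h0 hα
  have hn1 : (1 : ℝ) ≤ n := by exact_mod_cast hn
  have ha : α ≤ 1 / 32 := by nlinarith
  obtain ⟨W, rfl, hW⟩ := hL
  obtain ⟨W', rfl, hW'⟩ := hL'
  obtain ⟨p, hpW, hpx⟩ := hLr
  obtain ⟨q, hq, hqx⟩ := hLr'
  have hpW : p ∈ W := hpW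
  have hq : q ∈ W' := hq
  rw [mem_closedBall] at hpx
  have hfin : hausdorffEDist ((W : Set (Euc d)) ∩ closedBall x (2 * r))
      ((W' : Set (Euc d)) ∩ closedBall x (2 * r)) ≠ ⊤ := by
    apply hausdorffEDist_ne_top_of_nonempty_of_bounded
    · exact ⟨p, hpW, by rw [mem_closedBall]; linarith⟩
    · exact ⟨q, hq, hqx⟩
    · exact isBounded_closedBall.subset inter_subset_right
    · exact isBounded_closedBall.subset inter_subset_right
  have near : ∀ v ∈ W.direction, ‖v‖ ≤ r →
      dist (v + p) (prj W' q (v + p)) ≤ 2 * α * r := by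
    intro v hv hvr
    have hm : v + p ∈ (W : Set (Euc d)) ∩ closedBall x (2 * r) := by
      refine ⟨AffineSubspace.vadd_mem_of_mem_direction hv hpW, ?_⟩
      rw [mem_closedBall]
      have h1 := dist_triangle (v + p) p x
      have h2 : dist (v + p) p = ‖v‖ := by rw [dist_eq_norm]; simp
      linarith
    have h1 := (infDist_le_hausdorffDist_of_mem hm hfin).trans hH
    have h2 : dist (v + p) (prj W' q (v + p)) ≤
        infDist (v + p) ((W' : Set (Euc d)) ∩ closedBall x (2 * r)) := by
      have hne : ((W' : Set (Euc d)) ∩ closedBall x (2 * r)).Nonempty := ⟨q, hq, hqx⟩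
      rw [le_infDist hne]
      rintro w ⟨hw, -⟩
      exact prj_dist_le W' q w _ hq hw
    linarith
  have near0 : dist p (prj W' q p) ≤ 2 * α * r := by
    have := near 0 (Submodule.zero_mem _) (by simpa using hr.le)
    simpa using this
  have diffQ : ∀ v : Euc d, v - W'.direction.starProjection v =
      (v + p - prj W' q (v + p)) - (p - prj W' q p) := by
    intro v
    have := prj_sub W' q (v + p) p
    rw [add_sub_cancel_right] at this
    rw [← this]; abel
  have ang : ∀ v ∈ W.direction, ‖v - W'.direction.starProjection v‖ ≤ (4 * α) * ‖v‖ := by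
    intro v hv
    by_cases hv0 : v = 0
    · simp [hv0]
    have hvp : 0 < ‖v‖ := norm_pos_iff.2 hv0
    set t := r / ‖v‖ with ht
    have htp : 0 < t := by positivity
    have h1 : ‖t • v‖ = r := by
      rw [norm_smul, Real.norm_of_nonneg htp.le, ht]; field_simp
    have h2 := near (t • v) (Submodule.smul_mem _ _ hv) h1.le
    have h3 : ‖t • v - W'.direction.starProjection (t • v)‖ ≤ 4 * α * r := by
      rw [diffQ]
      refine (norm_sub_le _ _).trans ?_
      rw [dist_eq_norm] at h2 near0
      linarith
    rw [map_smul, ← smul_sub, norm_smul, Real.norm_of_nonneg htp.le] at h3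
    have h4 : r = t * ‖v‖ := by rw [ht]; field_simp
    rw [h4] at h3
    have h5 : t * ‖v - W'.direction.starProjection v‖ ≤ t * (4 * α * ‖v‖) := by linarith
    exact le_of_mul_le_mul_left h5 htp
  have disp : ∀ y ∈ W, dist y (prj W' q y) ≤ 4 * α * dist y p + 2 * α * r := by
    intro y hy
    have h1 := diffQ (y - p)
    rw [sub_add_cancel] at h1
    have h2 : y - prj W' q y = ((y - p) - W'.direction.starProjection (y - p)) +
        (p - prj W' q p) := by rw [h1]; abel
    have h3 := ang (y - p) (AffineSubspace.vsub_mem_direction hy hpW)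
    rw [dist_eq_norm, h2, dist_eq_norm y p]
    refine (norm_add_le _ _).trans ?_
    rw [dist_eq_norm] at near0
    linarith
  -- measure comparison
  have hm : Measurable (prj W' q) := (prj_lip W' q).continuous.measurable
  have hle1 := prj_le1 (n := n) W W' q (δ := 4 * α) (by linarith) p hpW hq (hW.trans hW'.symm) ang
  have hle2 := prj_le2 (n := n) W W' q (δ := 4 * α) (by linarith) hq ang
  have cmp := integral_compare k1 hle1 hle2 f1'
  have hcont := FR_cont hβ hA hS x hr
  rw [integral_map hm.aemeasurable hcont.aestronglyMeasurable] at cmp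
  have hi2 : Integrable (fun y => FR S x r (prj W' q y))
      ((μH[(n : ℝ)] : Measure (Euc d)).restrict W) := by
    have : Integrable (FR S x r)
        (((μH[(n : ℝ)] : Measure (Euc d)).restrict W).map (prj W' q)) :=
      (f1'.smul_measure ENNReal.ofReal_ne_top).mono_measure hle2
    exact this.comp_measurable hm
  -- pointwise
  have hpt : ∀ y ∈ W, |FR S x r y - FR S x r (prj W' q y)| ≤
      80 * A * α * GR ((n : ℝ) + β) x (r / 2) y := by
    intro y hy
    have hd := disp y hy
    have htri := dist_triangle_right y p x
    by_cases hyr : r / 2 ≤ dist x y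
    · have hxy : x ≠ y := dist_pos.1 (by linarith)
      have hp : 0 < dist x y := dist_pos.2 hxy
      rw [dist_comm y x] at htri
      have h16 : dist y (prj W' q y) ≤ 16 * α * dist x y := by nlinarith
      have hF := FR_diff hA hS x hr y (prj W' q y) hxy (by nlinarith)
      refine hF.trans ?_
      unfold GR
      rw [if_pos hyr, Real.rpow_add_one hp.ne', mul_one_div, div_le_div_iff₀ (by positivity)
        (by positivity)]
      have : 0 < dist x y ^ ((n : ℝ) + β) := by positivity
      calc 5 * A * dist y (prj W' q y) * dist x y ^ ((n : ℝ) + β)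
          ≤ 5 * A * (16 * α * dist x y) * dist x y ^ ((n : ℝ) + β) := by gcongr
        _ = _ := by ring
    · push Not at hyr
      have h1 : dist x (prj W' q y) ≤ r := by
        have := dist_triangle x y (prj W' q y)
        rw [dist_comm y x] at htri
        nlinarith
      have e1 : FR S x r y = 0 := by unfold FR; rw [cutR_zero x hr y (by linarith)]; simp
      have e2 : FR S x r (prj W' q y) = 0 := by unfold FR; rw [cutR_zero x hr _ h1]; simp
      rw [e1, e2]
      have := GR_nonneg ((n : ℝ) + β) x (r / 2) y
      simp only [sub_self, abs_zero]
      positivity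
  obtain ⟨g1, g2⟩ := tail_GR hβ hDL hg (half_pos hr)
  have dif : |∫ y in (W : Set (Euc d)), FR S x r y ∂(μH[(n : ℝ)]) -
      ∫ y in (W : Set (Euc d)), FR S x r (prj W' q y) ∂(μH[(n : ℝ)])| ≤ 80 * 2 ^ β * α * Q := by
    rw [← integral_sub f1 hi2]
    calc _ ≤ ∫ y in (W : Set (Euc d)), |FR S x r y - FR S x r (prj W' q y)| ∂(μH[(n : ℝ)]) :=
          abs_integral_le_integral_abs
      _ ≤ ∫ y in (W : Set (Euc d)), 80 * A * α * GR ((n : ℝ) + β) x (r / 2) y ∂(μH[(n : ℝ)]) := by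
          apply setIntegral_mono_on (f1.sub hi2).abs (g1.const_mul _)
          · exact W.closed_of_finiteDimensional.measurableSet
          · exact hpt
      _ = 80 * A * α * ∫ y in (W : Set (Euc d)), GR ((n : ℝ) + β) x (r / 2) y ∂(μH[(n : ℝ)]) :=
          integral_const_mul _ _
      _ ≤ 80 * A * α * (KK n β * DL n * (r / 2) ^ (-β)) := by gcongr
      _ = _ := by
          rw [Real.div_rpow hr.le (by norm_num), Real.rpow_neg (by norm_num : (0 : ℝ) ≤ 2), hQ]
          field_simp
  have cmp2 : |∫ y in (W : Set (Euc d)), FR S x r (prj W' q y) ∂(μH[(n : ℝ)]) -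
      ∫ y in (W' : Set (Euc d)), FR S x r y ∂(μH[(n : ℝ)])| ≤ 8 * n * α * Q := by
    refine cmp.trans ?_
    apply mul_le_mul k2 f2' (integral_nonneg fun y => abs_nonneg _) (by positivity)
  refine (abs_sub_le _ _ _).trans ((add_le_add dif cmp2).trans ?_)
  have : 0 ≤ n * α * Q := by positivity
  nlinarith

lemma msupport_closed {d : ℕ} (μ : Measure (Euc d)) : IsClosed (msupport μ) := by
  rw [← isOpen_compl_iff, Metric.isOpen_iff]
  intro x hx
  simp only [msupport, mem_compl_iff, Set.mem_ofPred_eq, not_forall, not_lt] at hx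
  obtain ⟨r, hr, h⟩ := hx
  refine ⟨r / 2, by positivity, ?_⟩
  intro y hy hyE
  have h1 := hyE (r / 2) (by positivity)
  have h2 : ball y (r / 2) ⊆ ball x r := by
    apply ball_subset_ball'
    rw [mem_ball] at hy
    linarith
  exact absurd (h1.trans_le ((measure_mono h2).trans h)) (lt_irrefl _)

lemma msupport_null {d : ℕ} (μ : Measure (Euc d)) : μ (msupport μ)ᶜ = 0 := by
  apply measure_null_of_locally_null
  intro x hx
  simp only [msupport, mem_compl_iff, Set.mem_ofPred_eq, not_forall, not_lt] at hx
  obtain ⟨r, hr, h⟩ := hx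
  exact ⟨ball x r, mem_nhdsWithin_of_mem_nhds (ball_mem_nhds x hr), le_antisymm h bot_le⟩

lemma adr_grow {d n : ℕ} {A : ℝ} {μ : Measure (Euc d)} (h : IsADRWith n A μ (msupport μ))
    (x : Euc d) : Grow μ x n (A * 2 ^ n) := by
  obtain ⟨hA, -, hb, hμ⟩ := h
  have hne : (msupport μ).Nonempty := by
    by_contra hne
    rw [not_nonempty_iff_eq_empty] at hne
    rw [hne] at hb
    exact hb Bornology.isBounded_empty
  intro r hr
  rcases (closedBall x r ∩ msupport μ).eq_empty_or_nonempty with h | ⟨z, hz, hzE⟩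
  · have : closedBall x r ⊆ (msupport μ)ᶜ := by
      intro y hy hyE
      have : y ∈ closedBall x r ∩ msupport μ := ⟨hy, hyE⟩
      rw [h] at this; exact this
    rw [measure_mono_null this (msupport_null μ)]
    exact bot_le
  · have h1 : closedBall x r ⊆ closedBall z (2 * r) := by
      apply closedBall_subset_closedBall'
      rw [mem_closedBall, dist_comm] at hz
      linarith
    refine (measure_mono h1).trans (((hμ z hzE (2 * r) (by positivity)).2).trans (le_of_eq ?_))
    rw [mul_pow]; congr 1; ring

/-- Applying hypothesis (i) to a difference of truncated kernels. -/
lemma test_step {d n : ℕ} {β A : ℝ} (hβ : 0 < β) (hA : 0 < A)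
    {S : Euc d → Euc d → ℝ} (hS : IsCZKernel n β A S) (x : Euc d) {R s r r' c a : ℝ}
    (hR : 0 < R) (hs : 0 < s) (hr : s * R ≤ r) (hrr : r ≤ r') (hr' : r' = R) (ha : 0 ≤ a)
    {μ : Measure (Euc d)} {L : Set (Euc d)}
    (hi : ∀ f : Euc d → ℝ, LipschitzWith 1 f → tsupport f ⊆ closedBall x (2 * R) →
          |(∫ y, f y ∂μ) - c * ∫ y in L, f y ∂(μH[(n : ℝ)])| ≤ a * R ^ (n + 1)) :
    |(∫ y, (FR S x r y - FR S x r' y) ∂μ) -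
      c * ∫ y in L, (FR S x r y - FR S x r' y) ∂(μH[(n : ℝ)])| ≤
      10 * A / s ^ ((n : ℝ) + β + 1) * a * R ^ (-β) := by
  have hsR : 0 < s * R := by positivity
  have hr0 : 0 < r := hsR.trans_le hr
  have hr0' : 0 < r' := hr0.trans_le hrr
  set M := 10 * A / (s * R) ^ ((n : ℝ) + β + 1) with hM
  have hMp : 0 < M := by positivity
  have hlip : LipschitzWith 1 (fun y => M⁻¹ * (FR S x r y - FR S x r' y)) := by
    apply LipschitzWith.of_dist_le_mul
    intro y y'
    have l1 := FR_lip hβ hA hS x hr0 y y'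
    have l2 := FR_lip hβ hA hS x hr0' y y'
    have m1 : 5 * A / r ^ ((n : ℝ) + β + 1) ≤ 5 * A / (s * R) ^ ((n : ℝ) + β + 1) := by
      gcongr
    have m2 : 5 * A / r' ^ ((n : ℝ) + β + 1) ≤ 5 * A / (s * R) ^ ((n : ℝ) + β + 1) := by
      have := hr.trans hrr
      gcongr
    rw [Real.dist_eq, NNReal.coe_one, one_mul, ← mul_sub, abs_mul, abs_of_pos (inv_pos.2 hMp),
      inv_mul_le_iff₀ hMp]
    have e : FR S x r y - FR S x r' y - (FR S x r y' - FR S x r' y') =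
      (FR S x r y - FR S x r y') - (FR S x r' y - FR S x r' y') := by ring
    rw [e]
    refine (abs_sub _ _).trans ?_
    have hd := dist_nonneg (x := y) (y := y')
    have n1 := mul_le_mul_of_nonneg_right m1 hd
    have n2 := mul_le_mul_of_nonneg_right m2 hd
    have e2 : M = 5 * A / (s * R) ^ ((n : ℝ) + β + 1) + 5 * A / (s * R) ^ ((n : ℝ) + β + 1) := by
      rw [hM]; ring
    rw [e2, add_mul]
    linarith
  have hsupp : tsupport (fun y => M⁻¹ * (FR S x r y - FR S x r' y)) ⊆ closedBall x (2 * R) := by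
    apply closure_minimal _ isClosed_closedBall
    intro y hy
    by_contra hc
    apply hy
    rw [mem_closedBall, dist_comm, not_le] at hc
    have c1 : cutR x r y = 1 := cutR_one x hr0 y (by linarith)
    have c2 : cutR x r' y = 1 := cutR_one x hr0' y (by linarith)
    simp [FR, c1, c2]
  have h := hi _ hlip hsupp
  rw [integral_const_mul, integral_const_mul] at h
  set I := ∫ y, (FR S x r y - FR S x r' y) ∂μ
  set J := ∫ y in L, (FR S x r y - FR S x r' y) ∂(μH[(n : ℝ)])
  have e : M⁻¹ * I - c * (M⁻¹ * J) = M⁻¹ * (I - c * J) := by ring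
  rw [e, abs_mul, abs_of_pos (inv_pos.2 hMp), inv_mul_le_iff₀ hMp] at h
  refine h.trans (le_of_eq ?_)
  rw [hM, Real.mul_rpow hs.le hR.le]
  have e2 : R ^ ((n : ℝ) + β + 1) = R ^ (n + 1) * (R ^ (-β))⁻¹ := by
    rw [Real.rpow_neg hR.le, inv_inv, ← Real.rpow_natCast, ← Real.rpow_add hR]
    congr 1; push_cast; ring
  rw [e2]
  have : 0 < R ^ (-β) := by positivity
  field_simp

/-- under the multiscale hypotheses (i)–(iii) and
`c₁ ℓ ≤ dist(x, L₀) ≤ c₁⁻¹ ℓ`, the potential `T_{S,μ}1(x)` is controlled by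
`ℓ^{-β} Σ 2^{-kβ} α_k` plus the supremum of `|T_{S,L}1(x)|` over `n`-planes `L` with
`c₁ ℓ ≤ dist(x,L) ≤ c₁⁻¹ ℓ`. -/
theorem statement11 (n d : ℕ) (hn : 0 < n) (hnd : n < d) (β A C₀ c₁ Aadr : ℝ)
    (hβ : 0 < β) (hA : 0 < A) (hC₀ : 0 < C₀) (hc₁ : 0 < c₁) :
    ∃ C : ℝ, 0 < C ∧
      ∀ μ : Measure (Euc d), IsADRWith n Aadr μ (msupport μ) →
      ∀ S : Euc d → Euc d → ℝ, IsCZKernel n β A S →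
      ∀ x : Euc d, x ∉ msupport μ →
      ∀ ℓ : ℝ, ℓ = infDist x (msupport μ) →
      ∀ (L : ℕ → Set (Euc d)) (c α : ℕ → ℝ),
        (∀ k, IsNPlane n (L k)) →
        (∀ k, (L k ∩ closedBall x ((2 : ℝ) ^ k * ℓ)).Nonempty) →
        (∀ k, 0 ≤ c k ∧ c k ≤ C₀) →
        (∀ k, 0 ≤ α k ∧ α k ≤ 1) →
        -- (i) d_{B(x, 2^{k+1}ℓ)}(μ, c_k ℋⁿ|_{L_k}) ≤ α_k (2^k ℓ)^{n+1}
        (∀ k, ∀ f : Euc d → ℝ, LipschitzWith 1 f →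
          tsupport f ⊆ closedBall x ((2 : ℝ) ^ (k + 1) * ℓ) →
          |(∫ y, f y ∂μ) - c k * ∫ y in L k, f y ∂(μH[(n : ℝ)])|
            ≤ α k * ((2 : ℝ) ^ k * ℓ) ^ (n + 1)) →
        -- (ii) |c_{k+1} - c_k| ≤ α_{k+1}
        (∀ k, |c (k + 1) - c k| ≤ α (k + 1)) →
        -- (iii) d_H(L_k ∩ B(x,2^{k+1}ℓ), L_{k+1} ∩ B(x,2^{k+1}ℓ)) ≤ α_{k+1} 2^{k+1} ℓ
        (∀ k, hausdorffDist (L k ∩ closedBall x ((2 : ℝ) ^ (k + 1) * ℓ))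
            (L (k + 1) ∩ closedBall x ((2 : ℝ) ^ (k + 1) * ℓ))
            ≤ α (k + 1) * (2 : ℝ) ^ (k + 1) * ℓ) →
        -- additionally c₁ ℓ ≤ dist(x, L₀) ≤ c₁⁻¹ ℓ
        c₁ * ℓ ≤ infDist x (L 0) → infDist x (L 0) ≤ c₁⁻¹ * ℓ →
        |∫ y, S x y ∂μ|
          ≤ C * (ℓ ^ (-β) * (∑' k : ℕ, (2 : ℝ) ^ (-(k : ℝ) * β) * α k)
              + sSup {t : ℝ | ∃ L' : Set (Euc d), IsNPlane n L' ∧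
                  c₁ * ℓ ≤ infDist x L' ∧ infDist x L' ≤ c₁⁻¹ * ℓ ∧
                  t = |∫ y in L', S x y ∂(μH[(n : ℝ)])|}) := by
  have hKK := KK_pos n hβ
  have hDL := DL_nonneg n
  have hBP := BP_nonneg n hβ hA
  obtain ⟨B1, hB1⟩ : ∃ B1, B1 = 10 * A / (c₁ / 2) ^ ((n : ℝ) + β + 1) := ⟨_, rfl⟩
  obtain ⟨B3, hB3⟩ : ∃ B3, B3 = A * (KK n β * DL n) + C₀ * BP n β A := ⟨_, rfl⟩
  have hB1p : 0 < B1 := by rw [hB1]; positivity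
  have hB3p : 0 ≤ B3 := by rw [hB3]; positivity
  refine ⟨B1 + 2 ^ β * B3 + C₀, by positivity, ?_⟩
  intro μ hμ S hS x hx ℓ hℓ L c α hL hLne hc hα hi hii hiii hd1 hd2
  have hne : (msupport μ).Nonempty := by
    by_contra hne
    rw [not_nonempty_iff_eq_empty] at hne
    have hb := hμ.2.2.1
    rw [hne] at hb
    exact hb Bornology.isBounded_empty
  have hℓp : 0 < ℓ := by
    rw [hℓ]; exact ((msupport_closed μ).notMem_iff_infDist_pos hne).1 hx
  have hc1 : c₁ ≤ 1 := by
    have h1 : c₁ * ℓ ≤ c₁⁻¹ * ℓ := hd1.trans hd2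
    have h2 := le_of_mul_le_mul_right h1 hℓp
    by_contra hlt
    push Not at hlt
    have := inv_lt_one_of_one_lt₀ hlt
    linarith
  have hgμ := adr_grow hμ x
  have hDμ : 0 ≤ Aadr * 2 ^ n := by
    have := hμ.1
    positivity
  have hgL : ∀ k, Grow ((μH[(n : ℝ)] : Measure (Euc d)).restrict (L k)) x n (DL n) :=
    fun k => plane_grow (hL k) x
  -- scales
  obtain ⟨r, hr0, hrs⟩ : ∃ r : ℕ → ℝ, r 0 = c₁ / 2 * ℓ ∧ ∀ j, r (j + 1) = 2 ^ j * ℓ :=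
    ⟨fun j => Nat.casesOn j (c₁ / 2 * ℓ) (fun j => 2 ^ j * ℓ), rfl, fun j => rfl⟩
  have hrp : ∀ j, 0 < r j := by
    intro j; cases j with
    | zero => rw [hr0]; positivity
    | succ j => rw [hrs]; positivity
  have hrl : ∀ j, c₁ / 2 * (2 ^ j * ℓ) ≤ r j := by
    intro j; cases j with
    | zero => rw [hr0]; simp
    | succ j =>
      rw [hrs, pow_succ]
      have : 0 < (2 : ℝ) ^ j * ℓ := by positivity
      nlinarith
  have hrm : ∀ j, r j ≤ r (j + 1) := by
    intro j; cases j with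
    | zero => rw [hr0, hrs]; simp; nlinarith
    | succ j => rw [hrs, hrs, pow_succ]; nlinarith [show 0 < (2 : ℝ) ^ j * ℓ by positivity]
  -- weights
  obtain ⟨w, hw⟩ : ∃ w : ℕ → ℝ, w = fun k : ℕ => (2 : ℝ) ^ (-(k : ℝ) * β) := ⟨_, rfl⟩
  have hwp : ∀ k, 0 < w k := by intro k; rw [hw]; positivity
  have hwg : ∀ k, w k = ((2 : ℝ) ^ (-β)) ^ k := by
    intro k
    rw [hw, ← Real.rpow_natCast, ← Real.rpow_mul (by norm_num)]
    ring_nf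
  have hws : ∀ k, w k = 2 ^ β * w (k + 1) := by
    intro k
    rw [hwg, hwg, pow_succ, Real.rpow_neg (by norm_num)]
    have : (0 : ℝ) < 2 ^ β := by positivity
    field_simp
  have hRw : ∀ j : ℕ, ((2 : ℝ) ^ j * ℓ) ^ (-β) = w j * ℓ ^ (-β) := by
    intro j
    rw [Real.mul_rpow (by positivity) hℓp.le, hw, ← Real.rpow_natCast,
      ← Real.rpow_mul (by norm_num)]
    congr 2; ring
  have hwsum : Summable w := by
    have : w = fun k => ((2 : ℝ) ^ (-β)) ^ k := funext hwg
    rw [this]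
    exact summable_geometric_of_lt_one (by positivity) (two_rpow_lt hβ)
  have hsum : Summable (fun k => w k * α k) := by
    refine Summable.of_nonneg_of_le (fun k => mul_nonneg (hwp k).le (hα k).1) (fun k => ?_) hwsum
    exact mul_le_of_le_one_right (hwp k).le (hα k).2
  obtain ⟨T, hT⟩ : ∃ T, T = ∑' k, w k * α k := ⟨_, rfl⟩
  have hTle : ∀ N, ∑ k ∈ Finset.range N, w k * α k ≤ T := by
    intro N
    rw [hT]
    exact hsum.sum_le_tsum _ (fun k _ => mul_nonneg (hwp k).le (hα k).1)
  have hT0 : 0 ≤ T := by simpa using hTle 0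
  obtain ⟨sup, hsup⟩ : ∃ s, s = sSup {t : ℝ | ∃ L' : Set (Euc d), IsNPlane n L' ∧
      c₁ * ℓ ≤ infDist x L' ∧ infDist x L' ≤ c₁⁻¹ * ℓ ∧
      t = |∫ y in L', S x y ∂(μH[(n : ℝ)])|} := ⟨_, rfl⟩
  have hTeq : (∑' k : ℕ, (2 : ℝ) ^ (-(k : ℝ) * β) * α k) = T := by rw [hT, hw]
  rw [hTeq, ← hsup]
  -- untruncated = truncated at level zero
  have hFS : ∀ y, c₁ * ℓ ≤ dist x y → FR S x (r 0) y = S x y := by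
    intro y hy
    unfold FR
    rw [cutR_one x (hrp 0) y (by rw [hr0]; linarith), one_mul]
  have hplane : ∀ L' : Set (Euc d), IsNPlane n L' → c₁ * ℓ ≤ infDist x L' →
      ∫ y in L', S x y ∂(μH[(n : ℝ)]) = ∫ y in L', FR S x (r 0) y ∂(μH[(n : ℝ)]) := by
    intro L' hL' hdd
    apply setIntegral_congr_fun (plane_closed hL').measurableSet
    intro y hy
    exact (hFS y (hdd.trans (infDist_le_dist_of_mem hy))).symm
  have hmu0 : ∫ y, S x y ∂μ = ∫ y, FR S x (r 0) y ∂μ := by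
    apply integral_congr_ae
    have : ∀ᵐ y ∂μ, y ∈ msupport μ := msupport_null μ
    filter_upwards [this] with y hy
    refine (hFS y ?_).symm
    have := infDist_le_dist_of_mem (x := x) hy
    rw [← hℓ] at this
    nlinarith
  have hL0sup : |∫ y in L 0, FR S x (r 0) y ∂(μH[(n : ℝ)])| ≤ sup := by
    rw [← hplane (L 0) (hL 0) hd1, hsup]
    apply le_csSup
    · refine ⟨A * (KK n β * DL n * (r 0) ^ (-β)), ?_⟩
      rintro t ⟨L', hL', h1, -, rfl⟩
      rw [hplane L' hL' h1]
      exact (tail_FR hβ hA hDL hS (plane_grow hL' x) (hrp 0)).2.2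
    · exact ⟨L 0, hL 0, hd1, hd2, rfl⟩
  have hsup0 : 0 ≤ sup := (abs_nonneg _).trans hL0sup
  -- the telescoping sequence
  obtain ⟨I, hI⟩ : ∃ I : ℕ → ℝ, I = fun j => ∫ y, FR S x (r j) y ∂μ := ⟨_, rfl⟩
  obtain ⟨J, hJ⟩ : ∃ J : ℕ → ℕ → ℝ,
    J = fun k j => ∫ y in L k, FR S x (r j) y ∂(μH[(n : ℝ)]) := ⟨_, rfl⟩
  have hJb : ∀ k j, |J k j| ≤ A * (KK n β * DL n * (r j) ^ (-β)) := by
    intro k j; rw [hJ]; exact (tail_FR hβ hA hDL hS (hgL k) (hrp j)).2.2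
  have hIb : ∀ j, |I j| ≤ A * (KK n β * (Aadr * 2 ^ n) * (r j) ^ (-β)) := by
    intro j; rw [hI]; exact (tail_FR hβ hA hDμ hS hgμ (hrp j)).2.2
  have hstep : ∀ j, |(I j - c j * J j j) - (I (j + 1) - c (j + 1) * J (j + 1) (j + 1))| ≤
      ℓ ^ (-β) * (B1 * (w j * α j) + 2 ^ β * B3 * (w (j + 1) * α (j + 1))) := by
    intro j
    have hRp : 0 < (2 : ℝ) ^ j * ℓ := by positivity
    have e2 : (2 : ℝ) ^ (j + 1) * ℓ = 2 * (2 ^ j * ℓ) := by rw [pow_succ]; ring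
    have s1 := test_step (c := c j) (a := α j) hβ hA hS x hRp (half_pos hc₁) (hrl j) (hrm j)
      (hrs j) (hα j).1 (μ := μ) (L := L j) (by
        have := hi j
        rw [e2] at this
        exact this)
    rw [integral_sub (tail_FR hβ hA hDμ hS hgμ (hrp j)).1
      (tail_FR hβ hA hDμ hS hgμ (hrp (j + 1))).1,
      integral_sub (tail_FR hβ hA hDL hS (hgL j) (hrp j)).1
      (tail_FR hβ hA hDL hS (hgL j) (hrp (j + 1))).1] at s1
    have s1' : |(I j - I (j + 1)) - c j * (J j j - J j (j + 1))| ≤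
        B1 * α j * ((2 : ℝ) ^ j * ℓ) ^ (-β) := by rw [hI, hJ, hB1]; exact s1
    have s2 : |J j (j + 1) - J (j + 1) (j + 1)| ≤
        BP n β A * α (j + 1) * ((2 : ℝ) ^ j * ℓ) ^ (-β) := by
      have h1 := hLne (j + 1)
      have h2 := hiii j
      rw [mul_assoc, e2] at h2
      rw [e2] at h1
      have := planes_compare hn hβ hA hS (hL j) (hL (j + 1)) x hRp (hα (j + 1)).1 (hLne j) h1 h2
      rw [← hrs] at this ⊢
      rw [hJ]; exact this
    have s3 := hJb (j + 1) (j + 1)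
    have s4 := hii j
    rw [hrs] at s3
    have e : (I j - c j * J j j) - (I (j + 1) - c (j + 1) * J (j + 1) (j + 1)) =
        ((I j - I (j + 1)) - c j * (J j j - J j (j + 1))) +
        ((c (j + 1) - c j) * J (j + 1) (j + 1) - c j * (J j (j + 1) - J (j + 1) (j + 1))) := by
      ring
    rw [hRw] at s1' s2 s3
    rw [e]
    have hαj := (hα (j + 1)).1
    have hl : 0 < ℓ ^ (-β) := by positivity
    have hwj := hwp j
    have u1 : |(c (j + 1) - c j) * J (j + 1) (j + 1)| ≤
        α (j + 1) * (A * (KK n β * DL n * (w j * ℓ ^ (-β)))) := by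
      rw [abs_mul]; exact mul_le_mul s4 s3 (abs_nonneg _) hαj
    have u2 : |c j * (J j (j + 1) - J (j + 1) (j + 1))| ≤
        C₀ * (BP n β A * α (j + 1) * (w j * ℓ ^ (-β))) := by
      rw [abs_mul, abs_of_nonneg (hc j).1]
      exact mul_le_mul (hc j).2 s2 (abs_nonneg _) hC₀.le
    refine (abs_add_le _ _).trans ((add_le_add s1' ((abs_sub _ _).trans
      (add_le_add u1 u2))).trans (le_of_eq ?_))
    rw [hB3]
    have := hws j
    calc _ = ℓ ^ (-β) * (B1 * (w j * α j) +
          (A * (KK n β * DL n) + C₀ * BP n β A) * (w j * α (j + 1))) := by ring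
      _ = _ := by rw [this]; ring
  have htel : ∀ N, |I 0 - c 0 * J 0 0| ≤ |I N - c N * J N N| +
      ∑ j ∈ Finset.range N,
        ℓ ^ (-β) * (B1 * (w j * α j) + 2 ^ β * B3 * (w (j + 1) * α (j + 1))) := by
    intro N
    induction N with
    | zero => simp
    | succ N ih =>
      rw [Finset.sum_range_succ]
      have h1 := hstep N
      have h2 := abs_sub_abs_le_abs_sub (I N - c N * J N N)
        (I (N + 1) - c (N + 1) * J (N + 1) (N + 1))
      linarith
  have hfin : ∀ N, ∑ j ∈ Finset.range N,
        ℓ ^ (-β) * (B1 * (w j * α j) + 2 ^ β * B3 * (w (j + 1) * α (j + 1))) ≤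
      (B1 + 2 ^ β * B3) * (ℓ ^ (-β) * T) := by
    intro N
    rw [← Finset.mul_sum, Finset.sum_add_distrib, ← Finset.mul_sum, ← Finset.mul_sum]
    have h1 := hTle N
    have h2 := hTle (N + 1)
    rw [Finset.sum_range_succ'] at h2
    have h3 : 0 ≤ w 0 * α 0 := mul_nonneg (hwp 0).le (hα 0).1
    have h4 : ∑ j ∈ Finset.range N, w (j + 1) * α (j + 1) ≤ T := by linarith
    calc _ ≤ ℓ ^ (-β) * (B1 * T + 2 ^ β * B3 * T) := by gcongr
      _ = _ := by ring
  have hlim : Filter.Tendsto (fun N => (A * (KK n β * (Aadr * 2 ^ n)) +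
      C₀ * (A * (KK n β * DL n))) * (w N * ℓ ^ (-β)) + (B1 + 2 ^ β * B3) * (ℓ ^ (-β) * T))
      Filter.atTop (nhds ((A * (KK n β * (Aadr * 2 ^ n)) +
      C₀ * (A * (KK n β * DL n))) * (0 * ℓ ^ (-β)) + (B1 + 2 ^ β * B3) * (ℓ ^ (-β) * T))) :=
    ((hwsum.tendsto_atTop_zero.mul_const _).const_mul _).add_const _
  have hmain : |I 0 - c 0 * J 0 0| ≤ (B1 + 2 ^ β * B3) * (ℓ ^ (-β) * T) := by
    rw [zero_mul, mul_zero, zero_add] at hlim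
    refine ge_of_tendsto' hlim (fun N => ?_)
    refine (htel (N + 1)).trans (add_le_add ?_ (hfin (N + 1)))
    have h1 := hIb (N + 1)
    have h2 := hJb (N + 1) (N + 1)
    rw [hrs, hRw] at h1 h2
    refine (abs_sub _ _).trans ?_
    rw [abs_mul, abs_of_nonneg (hc (N + 1)).1]
    have h3 := mul_le_mul (hc (N + 1)).2 h2 (abs_nonneg _) hC₀.le
    refine (add_le_add h1 h3).trans (le_of_eq ?_)
    ring
  have hJ0 : |J 0 0| ≤ sup := by rw [hJ]; exact hL0sup
  have hI0 : ∫ y, S x y ∂μ = I 0 := by rw [hmu0, hI]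
  rw [hI0]
  have h1 := abs_sub_abs_le_abs_sub (I 0) (c 0 * J 0 0)
  have h2 : |c 0 * J 0 0| ≤ C₀ * sup := by
    rw [abs_mul, abs_of_nonneg (hc 0).1]
    exact mul_le_mul (hc 0).2 hJ0 (abs_nonneg _) hC₀.le
  have h3 : 0 ≤ C₀ * (ℓ ^ (-β) * T) := by positivity
  have h4 : 0 ≤ (B1 + 2 ^ β * B3) * sup := by positivity
  nlinarith
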